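/- Given a finite tree T whose vertex set is partitioned into clusters each of size at most 2, there exists a subset X of vertices containing exactly one vertex from each cluster, together with a tree structure on X in which each edge joins two vertices whose distance in T is at most 3. -/

import Mathlib

/-- A transversal of a partition `P` into clusters of size at most `2` can be chosen to meet every
member of a given family `M` of pairwise disjoint sets of size `2`. -/
theorem exists_transversal_inter_nonempty {V : Type*} [Fintype V] [DecidableEq V]
    (P M : Finset (Finset V))
    (hne : ∀ C ∈ P, C.Nonempty)
    (hsize : ∀ C ∈ P, C.card ≤ 2)
    (hdisj : ∀ C ∈ P, ∀ D ∈ P, C ≠ D → Disjoint C D)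
    (hcover : P.biUnion id = Finset.univ)
    (hM : ∀ B ∈ M, B.card = 2)
    (hMdisj : ∀ B ∈ M, ∀ D ∈ M, B ≠ D → Disjoint B D) :
    ∃ X : Finset V, (∀ C ∈ P, (X ∩ C).card = 1) ∧ ∀ B ∈ M, ∃ x ∈ X, x ∈ B := by
  classical
  let t : {B // B ∈ M} → Finset (Finset V) := fun B => P.filter fun C => ∃ x ∈ C, x ∈ B.1
  have hall : ∀ s : Finset {B // B ∈ M}, s.card ≤ (s.biUnion t).card := by
    intro s
    have h1 : (s.biUnion fun B => B.1).card = s.card * 2 := by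
      rw [Finset.card_biUnion, Finset.sum_const_nat]
      · exact fun B _ => hM _ B.2
      · exact fun B _ D _ hBD => hMdisj _ B.2 _ D.2 fun h => hBD (Subtype.ext h)
    have h2 : (s.biUnion fun B => B.1) ⊆ (s.biUnion t).biUnion id := by
      intro x hx
      obtain ⟨B, hB, hxB⟩ := Finset.mem_biUnion.1 hx
      obtain ⟨C, hC, hxC⟩ := Finset.mem_biUnion.1 (hcover ▸ Finset.mem_univ x)
      exact Finset.mem_biUnion.2 ⟨C, Finset.mem_biUnion.2
        ⟨B, hB, Finset.mem_filter.2 ⟨hC, x, hxC, hxB⟩⟩, hxC⟩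
    have h3 : ((s.biUnion t).biUnion id).card ≤ (s.biUnion t).card * 2 := by
      refine Finset.card_biUnion_le_card_mul _ _ _ fun C hC => ?_
      obtain ⟨B, -, hCB⟩ := Finset.mem_biUnion.1 hC
      exact hsize C (Finset.mem_filter.1 hCB).1
    have := Finset.card_le_card h2
    omega
  obtain ⟨f, hf, hft⟩ := (Finset.all_card_le_biUnion_card_iff_exists_injective t).1 hall
  have hrep : ∀ C : {C // C ∈ P}, ∃ c ∈ C.1, ∀ B, f B = C.1 → c ∈ B.1 := by
    rintro ⟨C, hC⟩
    by_cases h : ∃ B, f B = C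
    · obtain ⟨B, rfl⟩ := h
      obtain ⟨-, x, hxC, hxB⟩ := Finset.mem_filter.1 (hft B)
      exact ⟨x, hxC, fun D hD => hf hD ▸ hxB⟩
    · obtain ⟨x, hx⟩ := hne C hC
      exact ⟨x, hx, fun B hB => (h ⟨B, hB⟩).elim⟩
  choose c hcC hcB using hrep
  refine ⟨P.attach.image c, fun C hC => ?_, fun B hB => ?_⟩
  · refine Finset.card_eq_one.2 ⟨c ⟨C, hC⟩, ?_⟩
    ext x
    simp only [Finset.mem_inter, Finset.mem_image, Finset.mem_attach, true_and,
      Finset.mem_singleton]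
    constructor
    · rintro ⟨⟨D, rfl⟩, hx⟩
      have : D = ⟨C, hC⟩ := by
        by_contra hne'
        exact Finset.disjoint_left.1
          (hdisj _ D.2 _ hC fun h => hne' (Subtype.ext h)) (hcC D) hx
      rw [this]
    · rintro rfl
      exact ⟨⟨_, rfl⟩, hcC _⟩
  · exact ⟨c ⟨f ⟨B, hB⟩, (Finset.mem_filter.1 (hft _)).1⟩,
      Finset.mem_image_of_mem _ (Finset.mem_attach _ _), hcB _ ⟨B, hB⟩ rfl⟩

/-- The graph on a vertex set `X` joining distinct vertices at distance at most `k` in `G`. -/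
def SimpleGraph.distLEGraph {V : Type*} (G : SimpleGraph V) (k : ℕ) (X : Finset V) :
    SimpleGraph {x // x ∈ X} where
  Adj u v := u ≠ v ∧ G.dist u.1 v.1 ≤ k
  symm := ⟨fun _ _ h => ⟨h.1.symm, G.dist_comm ▸ h.2⟩⟩
  loopless := ⟨fun _ h => h.1 rfl⟩

theorem SimpleGraph.distLEGraph_reachable {V : Type*} (G : SimpleGraph V) {k : ℕ} {X : Finset V}
    {u v : {x // x ∈ X}} (h : G.dist u.1 v.1 ≤ k) : (G.distLEGraph k X).Reachable u v := by
  by_cases huv : u = v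
  · exact huv ▸ Reachable.refl _
  · exact Adj.reachable (G := G.distLEGraph k X) ⟨huv, h⟩

/-- A matching `M` inside `S`, every set `X` meeting all of whose edges is linked within `S` by
steps of length at most `3` and comes within distance `2` of the unmatched vertices of `S`. -/
structure SimpleGraph.IsLinkingMatching {V : Type*} (G : SimpleGraph V) (S : Finset V)
    (M : Finset (Finset V)) : Prop where
  card_eq : ∀ B ∈ M, B.card = 2
  subset : ∀ B ∈ M, B ⊆ S
  disjoint : ∀ B ∈ M, ∀ D ∈ M, B ≠ D → Disjoint B D
  dist_le : ∀ B ∈ M, ∀ x ∈ B, ∀ y ∈ B, G.dist x y ≤ 1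
  reachable : ∀ X : Finset V, (∀ B ∈ M, ∃ x ∈ X, x ∈ B) →
    ∀ x y : {x // x ∈ X}, x.1 ∈ S → y.1 ∈ S → (G.distLEGraph 3 X).Reachable x y
  near : ∀ X : Finset V, (∀ B ∈ M, ∃ x ∈ X, x ∈ B) →
    ∀ u ∈ S, (∀ B ∈ M, u ∉ B) → (∃ x ∈ X, x ∈ S ∧ G.dist u x ≤ 2) ∨ S = {u}

theorem SimpleGraph.isLinkingMatching_singleton {V : Type*} (G : SimpleGraph V) (v : V) :
    G.IsLinkingMatching {v} ∅ where
  card_eq := by simp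
  subset := by simp
  disjoint := by simp
  dist_le := by simp
  reachable X _ x y hx hy := by
    have : x = y := Subtype.ext ((Finset.mem_singleton.1 hx).trans (Finset.mem_singleton.1 hy).symm)
    exact this ▸ Reachable.refl _
  near X _ u hu _ := Or.inr (by rw [Finset.mem_singleton.1 hu])

/-- Linkedness extends to a new vertex which is within distance `3` of the old ones in `X`. -/
theorem SimpleGraph.distLEGraph_reachable_insert {V : Type*} [DecidableEq V] (G : SimpleGraph V)
    {k : ℕ} {X S : Finset V} {w : V}
    (hS : ∀ x y : {x // x ∈ X}, x.1 ∈ S → y.1 ∈ S → (G.distLEGraph k X).Reachable x y)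
    (hw : (∃ x ∈ X, x ∈ S ∧ G.dist w x ≤ k) ∨ ∀ x ∈ X, x ∈ S → G.dist w x ≤ k)
    (x y : {x // x ∈ X}) (hx : x.1 ∈ insert w S) (hy : y.1 ∈ insert w S) :
    (G.distLEGraph k X).Reachable x y := by
  have key : ∀ a b : {x // x ∈ X}, a.1 = w → b.1 ∈ S → (G.distLEGraph k X).Reachable a b := by
    intro a b ha hb
    rcases hw with ⟨z, hzX, hzS, hz⟩ | hw
    · exact (G.distLEGraph_reachable (v := ⟨z, hzX⟩) (ha ▸ hz)).trans (hS ⟨z, hzX⟩ b hzS hb)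
    · exact G.distLEGraph_reachable (ha ▸ hw b.1 b.2 hb)
  rcases Finset.mem_insert.1 hx with hx | hx <;> rcases Finset.mem_insert.1 hy with hy | hy
  · exact Subtype.ext (hx.trans hy.symm) ▸ Reachable.refl _
  · exact key x y hx hy
  · exact (key y x hy hx).symm
  · exact hS x y hx hy

theorem SimpleGraph.IsLinkingMatching.exists_insert {V : Type*} [DecidableEq V]
    {G : SimpleGraph V} (hG : G.Connected) {S : Finset V} {M : Finset (Finset V)}
    (h : G.IsLinkingMatching S M) {u w : V} (hu : u ∈ S) (hw : w ∉ S) (huw : G.Adj u w) :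
    ∃ M', G.IsLinkingMatching (insert w S) M' := by
  have hd : G.dist w u = 1 := dist_eq_one_iff_adj.2 huw.symm
  by_cases hm : ∃ B ∈ M, u ∈ B
  · obtain ⟨B, hB, huB⟩ := hm
    have near_w : ∀ X : Finset V, (∀ B ∈ M, ∃ x ∈ X, x ∈ B) →
        ∃ x ∈ X, x ∈ S ∧ G.dist w x ≤ 2 := by
      intro X hX
      obtain ⟨x, hxX, hxB⟩ := hX B hB
      have h1 := h.dist_le B hB u huB x hxB
      have h2 := hG.dist_triangle (u := w) (v := u) (w := x)
      exact ⟨x, hxX, h.subset B hB hxB, by omega⟩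
    refine ⟨M, h.card_eq, fun B hB => (h.subset B hB).trans (Finset.subset_insert _ _),
      h.disjoint, h.dist_le, fun X hX => ?_, fun X hX v hv hvM => Or.inl ?_⟩
    · obtain ⟨x, hxX, hxS, hx⟩ := near_w X hX
      exact G.distLEGraph_reachable_insert (h.reachable X hX)
        (Or.inl ⟨x, hxX, hxS, hx.trans (by norm_num)⟩)
    · rcases Finset.mem_insert.1 hv with rfl | hv
      · obtain ⟨x, hxX, hxS, hx⟩ := near_w X hX
        exact ⟨x, hxX, Finset.mem_insert_of_mem hxS, hx⟩
      · rcases h.near X hX v hv hvM with ⟨x, hxX, hxS, hx⟩ | hS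
        · exact ⟨x, hxX, Finset.mem_insert_of_mem hxS, hx⟩
        · have huv : u = v := Finset.mem_singleton.1 (hS ▸ hu)
          exact (hvM B hB (huv ▸ huB)).elim
  · push Not at hm
    have hnew : ∀ D ∈ M, Disjoint {u, w} D := by
      intro D hD
      rw [Finset.disjoint_insert_left, Finset.disjoint_singleton_left]
      exact ⟨hm D hD, fun hwD => hw (h.subset D hD hwD)⟩
    refine ⟨insert {u, w} M, ?_, ?_, ?_, ?_, fun X hX => ?_, fun X hX v hv hvM => Or.inl ?_⟩
    · intro B hB
      rcases Finset.mem_insert.1 hB with rfl | hB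
      · exact Finset.card_pair huw.ne
      · exact h.card_eq B hB
    · intro B hB
      rcases Finset.mem_insert.1 hB with rfl | hB
      · intro x hx
        rcases Finset.mem_insert.1 hx with rfl | hx
        · exact Finset.mem_insert_of_mem hu
        · exact Finset.mem_insert.2 (Or.inl (Finset.mem_singleton.1 hx))
      · exact (h.subset B hB).trans (Finset.subset_insert _ _)
    · intro B hB D hD hBD
      rcases Finset.mem_insert.1 hB with rfl | hB <;> rcases Finset.mem_insert.1 hD with rfl | hD
      · exact (hBD rfl).elim
      · exact hnew D hD
      · exact (hnew B hB).symm
      · exact h.disjoint B hB D hD hBD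
    · intro B hB x hx y hy
      rcases Finset.mem_insert.1 hB with rfl | hB
      · have hd' : G.dist u w = 1 := G.dist_comm.trans hd
        simp only [Finset.mem_insert, Finset.mem_singleton] at hx hy
        rcases hx with rfl | rfl <;> rcases hy with rfl | rfl <;> simp [hd, hd']
      · exact h.dist_le B hB x hx y hy
    · have hX' : ∀ B ∈ M, ∃ x ∈ X, x ∈ B := fun B hB => hX B (Finset.mem_insert_of_mem hB)
      refine G.distLEGraph_reachable_insert (h.reachable X hX') ?_
      rcases h.near X hX' u hu hm with ⟨x, hxX, hxS, hx⟩ | hS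
      · have h2 := hG.dist_triangle (u := w) (v := u) (w := x)
        exact Or.inl ⟨x, hxX, hxS, by omega⟩
      · right
        intro x _ hxS
        rw [hS, Finset.mem_singleton] at hxS
        rw [hxS, hd]
        norm_num
    · have hX' : ∀ B ∈ M, ∃ x ∈ X, x ∈ B := fun B hB => hX B (Finset.mem_insert_of_mem hB)
      have hvuw := hvM _ (Finset.mem_insert_self _ _)
      simp only [Finset.mem_insert, Finset.mem_singleton, not_or] at hvuw
      have hvS : v ∈ S := (Finset.mem_insert.1 hv).resolve_left hvuw.2
      rcases h.near X hX' v hvS fun B hB => hvM B (Finset.mem_insert_of_mem hB) with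
        ⟨x, hxX, hxS, hx⟩ | hS
      · exact ⟨x, hxX, Finset.mem_insert_of_mem hxS, hx⟩
      · exact (hvuw.1 (Finset.mem_singleton.1 (hS ▸ hu)).symm).elim

theorem SimpleGraph.Connected.exists_adj_mem_notMem {V : Type*} {G : SimpleGraph V}
    (hG : G.Connected) {S : Set V} {a b : V} (ha : a ∈ S) (hb : b ∉ S) :
    ∃ u ∈ S, ∃ w ∉ S, G.Adj u w := by
  obtain ⟨p⟩ := hG.preconnected a b
  obtain ⟨d, -, h1, h2⟩ := p.exists_boundary_dart S ha hb
  exact ⟨d.fst, h1, d.snd, h2, d.adj⟩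

theorem SimpleGraph.Connected.exists_isLinkingMatching {V : Type*} [Fintype V] [DecidableEq V]
    {G : SimpleGraph V} (hG : G.Connected) : ∃ M, G.IsLinkingMatching Finset.univ M := by
  obtain ⟨v⟩ := hG.nonempty
  have grow : ∀ n : ℕ, ∀ S : Finset V, S.Nonempty → Sᶜ.card = n →
      (∃ M, G.IsLinkingMatching S M) → ∃ M, G.IsLinkingMatching Finset.univ M := by
    intro n
    induction n with
    | zero =>
      intro S _ hn hM
      rw [Finset.card_eq_zero, Finset.compl_eq_empty_iff] at hn
      exact hn ▸ hM
    | succ n ih =>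
      rintro S ⟨a, ha⟩ hn ⟨M, hM⟩
      obtain ⟨b, hb⟩ : Sᶜ.Nonempty := Finset.card_pos.1 (by omega)
      obtain ⟨u, hu, w, hw, huw⟩ := hG.exists_adj_mem_notMem (S := (S : Set V)) ha
        (by simpa using hb)
      rw [Finset.mem_coe] at hu hw
      refine ih (insert w S) (Finset.insert_nonempty _ _) ?_ (hM.exists_insert hG hu hw huw)
      rw [Finset.compl_insert, Finset.card_erase_of_mem (Finset.mem_compl.2 hw), hn]
      rfl
  exact grow _ {v} (Finset.singleton_nonempty v) rfl ⟨∅, G.isLinkingMatching_singleton v⟩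


/-- Given a finite tree `G` whose vertex set is partitioned into clusters of
size at most 2, there is a set `X` of vertices containing exactly one vertex
from each cluster, together with a tree structure on `X` all of whose edges
join vertices at distance at most `3` in `G`. -/
theorem gbst_representatives_tree {V : Type*} [Fintype V] [DecidableEq V]
    (G : SimpleGraph V) (hG : G.IsTree)
    (P : Finset (Finset V))
    (hne : ∀ C ∈ P, C.Nonempty)
    (hsize : ∀ C ∈ P, C.card ≤ 2)
    (hdisj : ∀ C ∈ P, ∀ D ∈ P, C ≠ D → Disjoint C D)
    (hcover : P.biUnion id = Finset.univ) :
    ∃ X : Finset V, (∀ C ∈ P, (X ∩ C).card = 1) ∧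
      ∃ H : SimpleGraph {x // x ∈ X}, H.IsTree ∧
        ∀ u v : {x // x ∈ X}, H.Adj u v → G.dist u.1 v.1 ≤ 3 := by
  obtain ⟨M, hM⟩ := hG.1.exists_isLinkingMatching
  obtain ⟨X, hXP, hXM⟩ := exists_transversal_inter_nonempty P M hne hsize hdisj hcover
    hM.card_eq hM.disjoint
  refine ⟨X, hXP, ?_⟩
  obtain ⟨v⟩ := hG.1.nonempty
  obtain ⟨C, hC, -⟩ := Finset.mem_biUnion.1 (hcover ▸ Finset.mem_univ v)
  obtain ⟨x, hx⟩ : (X ∩ C).Nonempty := Finset.card_pos.1 (by rw [hXP C hC]; exact one_pos)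
  have : Nonempty {x // x ∈ X} := ⟨⟨x, (Finset.mem_inter.1 hx).1⟩⟩
  have hconn : (G.distLEGraph 3 X).Connected :=
    ⟨fun x y => hM.reachable X hXM x y (Finset.mem_univ _) (Finset.mem_univ _)⟩
  obtain ⟨H, hle, hH⟩ := hconn.exists_isTree_le
  exact ⟨H, hH, fun u v huv => (hle huv).2⟩
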